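/- Let P_1, ..., P_{n+1} be a proper family of lattice polytopes in R^n such that int_Z(P_I) = ∅ for all nonempty proper subsets I ⊊ [n+1] and int_Z(P_{[n+1]}) ≠ ∅. Then the Minkowski sum P_{[n+1]} contains exactly one interior lattice point. -/

import Mathlib

open scoped Pointwise
open MeasureTheory Finset

def IsLatticePt {n : ℕ} (x : Fin n → ℝ) : Prop := ∀ i, ∃ z : ℤ, x i = (z : ℝ)

def IsLatticePolytope {n : ℕ} (P : Set (Fin n → ℝ)) : Prop :=
  ∃ V : Finset (Fin n → ℝ), V.Nonempty ∧ (∀ v ∈ V, IsLatticePt v) ∧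
    P = convexHull ℝ (V : Set (Fin n → ℝ))

noncomputable def adim {n : ℕ} (A : Set (Fin n → ℝ)) : ℕ :=
  Module.finrank ℝ (affineSpan ℝ A).direction

def relintLat {n : ℕ} (A : Set (Fin n → ℝ)) : Set (Fin n → ℝ) :=
  {x ∈ intrinsicInterior ℝ A | IsLatticePt x}

def intLat {n : ℕ} (A : Set (Fin n → ℝ)) : Set (Fin n → ℝ) :=
  {x ∈ interior A | IsLatticePt x}

noncomputable def mixedVol {n m : ℕ} (P : Fin m → Set (Fin n → ℝ)) : ℝ :=
  ∑ I : Finset (Fin m), (-1 : ℝ) ^ (m - I.card) * (volume (∑ i ∈ I, P i)).toReal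


open Classical in
/-- indicator as integer -/
noncomputable def indZ (p : Prop) : ℤ := if p then 1 else 0

lemma indZ_true {p : Prop} (h : p) : indZ p = 1 := by simp [indZ, h]
lemma indZ_false {p : Prop} (h : ¬ p) : indZ p = 0 := by simp [indZ, h]
lemma indZ_and (p q : Prop) : indZ (p ∧ q) = indZ p * indZ q := by
  by_cases hp : p <;> by_cases hq : q <;> simp [indZ, hp, hq]
lemma indZ_congr {p q : Prop} (h : p ↔ q) : indZ p = indZ q := by rw [propext h]

/-- right germs of a closed interval -/
lemma eventually_right {J : Set ℝ} (hc : IsClosed J) (ho : J.OrdConnected) (t : ℝ) :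
    ∀ᶠ s in nhdsWithin t (Set.Ioi t), indZ (s ∈ J) = indZ (t ∈ J) - indZ (IsGreatest J t) := by
  by_cases ht : t ∈ J
  · by_cases hg : IsGreatest J t
    · rw [indZ_true ht, indZ_true hg]
      filter_upwards [self_mem_nhdsWithin] with s hs
      rw [indZ_false]
      · rfl
      · intro h; exact absurd (hg.2 h) (not_le.mpr hs)
    · rw [indZ_true ht, indZ_false hg]
      have : ∃ r ∈ J, t < r := by
        by_contra! hcon
        exact hg ⟨ht, fun r hr => hcon r hr⟩
      obtain ⟨r, hr, htr⟩ := this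
      filter_upwards [Ioo_mem_nhdsGT htr] with s hs
      rw [indZ_true (ho.out ht hr ⟨hs.1.le, hs.2.le⟩)]
      rfl
  · have hg : ¬ IsGreatest J t := fun h => ht h.1
    rw [indZ_false ht, indZ_false hg]
    have : ∀ᶠ s in nhdsWithin t (Set.Ioi t), s ∈ Jᶜ :=
      nhdsWithin_le_nhds (hc.isOpen_compl.mem_nhds ht)
    filter_upwards [this] with s hs
    rw [indZ_false hs]; rfl

lemma eventually_bot {J : Set ℝ} (ho : J.OrdConnected) :
    ∀ᶠ s in Filter.atBot, indZ (s ∈ J) = indZ (J.Nonempty ∧ ¬ BddBelow J) := by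
  by_cases h : J.Nonempty ∧ ¬ BddBelow J
  · obtain ⟨⟨r, hr⟩, hb⟩ := h
    filter_upwards [Filter.eventually_le_atBot r] with s hs
    rw [indZ_true (show J.Nonempty ∧ ¬ BddBelow J from ⟨⟨r, hr⟩, hb⟩), indZ_true]
    rw [not_bddBelow_iff] at hb
    obtain ⟨q, hq, hqs⟩ := hb s
    exact ho.out hq hr ⟨hqs.le, hs⟩
  · rw [indZ_false h]
    by_cases hne : J.Nonempty
    · have hb : BddBelow J := by tauto
      obtain ⟨b, hb⟩ := hb
      filter_upwards [Filter.eventually_lt_atBot b] with s hs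
      rw [indZ_false]
      intro hsJ
      exact absurd (hb hsJ) (not_le.mpr hs)
    · rw [Set.not_nonempty_iff_eq_empty] at hne
      subst hne
      exact Filter.Eventually.of_forall fun s => by rw [indZ_false]; simp

lemma one_dim {ι : Type*} (s : Finset ι) (c : ι → ℤ) (J : ι → Set ℝ)
    (hc : ∀ j, IsClosed (J j)) (ho : ∀ j, (J j).OrdConnected)
    (h : ∀ t, ∑ j ∈ s, c j * indZ (t ∈ J j) = 0) :
    ∑ j ∈ s, c j * (indZ (∃ t, IsGreatest (J j) t)
      - indZ ((J j).Nonempty ∧ ¬ BddBelow (J j))) = 0 := by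
  classical
  have h1 : ∀ t, ∑ j ∈ s, c j * indZ (IsGreatest (J j) t) = 0 := by
    intro t
    have hev : ∀ᶠ r in nhdsWithin t (Set.Ioi t), ∀ j ∈ s,
        indZ (r ∈ J j) = indZ (t ∈ J j) - indZ (IsGreatest (J j) t) :=
      (Finset.eventually_all s).2 fun j _ => eventually_right (hc j) (ho j) t
    obtain ⟨r, hr⟩ := hev.exists
    have h2 := h r
    rw [Finset.sum_congr rfl (fun j hj => by rw [hr j hj])] at h2
    simp only [mul_sub, Finset.sum_sub_distrib, h t] at h2
    linarith
  have h2 : ∑ j ∈ s, c j * indZ ((J j).Nonempty ∧ ¬ BddBelow (J j)) = 0 := by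
    have hev : ∀ᶠ r in Filter.atBot, ∀ j ∈ s,
        indZ (r ∈ J j) = indZ ((J j).Nonempty ∧ ¬ BddBelow (J j)) :=
      (Finset.eventually_all s).2 fun j _ => eventually_bot (ho j)
    obtain ⟨r, hr⟩ := hev.exists
    rw [← h r]
    exact Finset.sum_congr rfl (fun j hj => by rw [hr j hj])
  have h3 : ∑ j ∈ s, c j * indZ (∃ t, IsGreatest (J j) t) = 0 := by
    set E : Finset ℝ := s.image (fun j => sSup (J j))
    have : ∀ j ∈ s, c j * indZ (∃ t, IsGreatest (J j) t)
        = ∑ t ∈ E, c j * indZ (IsGreatest (J j) t) := by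
      intro j hj
      rw [← Finset.mul_sum]
      congr 1
      by_cases hg : ∃ t, IsGreatest (J j) t
      · obtain ⟨t, ht⟩ := hg
        have htE : t ∈ E := Finset.mem_image.2 ⟨j, hj, ht.csSup_eq⟩
        rw [Finset.sum_eq_single_of_mem t htE, indZ_true ⟨t, ht⟩, indZ_true ht]
        intro b _ hb
        exact indZ_false fun hb' => hb (hb'.unique ht)
      · rw [indZ_false hg]
        refine (Finset.sum_eq_zero fun t _ => ?_).symm
        exact indZ_false fun h => hg ⟨t, h⟩
    rw [Finset.sum_congr rfl this, Finset.sum_comm]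
    exact Finset.sum_eq_zero fun t _ => h1 t
  simp only [mul_sub, Finset.sum_sub_distrib, h2, h3, sub_zero]

/-- Fourier-Motzkin in one variable -/
lemma fm_core {κ : Type*} (S : Finset κ) (α c : κ → ℝ) :
    (∃ t, ∀ p ∈ S, α p * t ≤ c p) ↔
      (∀ p ∈ S, α p = 0 → 0 ≤ c p) ∧
      (∀ p ∈ S, ∀ q ∈ S, 0 < α p → α q < 0 → α q * c p ≤ α p * c q) := by
  classical
  constructor
  · rintro ⟨t, ht⟩
    refine ⟨fun p hp h0 => by simpa [h0] using ht p hp, fun p hp q hq h1 h2 => ?_⟩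
    have := mul_le_mul_of_nonneg_left (ht q hq) h1.le
    have := mul_le_mul_of_nonpos_left (ht p hp) h2.le
    linarith
  · rintro ⟨h0, h1⟩
    have key : ∀ t, (∀ p ∈ S, 0 < α p → t ≤ c p / α p) → (∀ q ∈ S, α q < 0 → c q / α q ≤ t) →
        ∀ p ∈ S, α p * t ≤ c p := by
      intro t hu hl p hp
      rcases lt_trichotomy (α p) 0 with h | h | h
      · have := hl p hp h
        rw [div_le_iff_of_neg h] at this
        linarith
      · simpa [h] using h0 p hp h
      · have := hu p hp h
        rw [le_div_iff₀ h] at this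
        linarith
    by_cases hU : (S.filter (fun p => 0 < α p)).Nonempty
    · obtain ⟨p, hp, hmin⟩ := Finset.exists_min_image _ (fun p => c p / α p) hU
      rw [Finset.mem_filter] at hp
      refine ⟨c p / α p, key _ (fun q hq hq' => hmin q (by simp [hq, hq'])) fun q hq hq' => ?_⟩
      rw [div_le_iff_of_neg hq', div_mul_eq_mul_div, div_le_iff₀ hp.2]
      have := h1 p hp.1 q hq hp.2 hq'
      linarith
    · by_cases hL : (S.filter (fun p => α p < 0)).Nonempty
      · obtain ⟨p, hp, hmax⟩ := Finset.exists_max_image _ (fun p => c p / α p) hL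
        refine ⟨c p / α p, key _ (fun q hq hq' => ?_) fun q hq hq' => hmax q (by simp [hq, hq'])⟩
        exact absurd ⟨q, by simp [hq, hq']⟩ hU
      · refine ⟨0, key _ (fun q hq hq' => ?_) (fun q hq hq' => ?_)⟩
        · exact absurd ⟨q, by simp [hq, hq']⟩ hU
        · exact absurd ⟨q, by simp [hq, hq']⟩ hL

/-- linear inequality systems -/
abbrev Sys (n : ℕ) := Finset ((Fin n → ℝ) × ℝ)

def PQ {n : ℕ} (S : Sys n) : Set (Fin n → ℝ) := {u | ∀ p ∈ S, p.1 ⬝ᵥ u ≤ p.2}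
def PC {n : ℕ} (S : Sys n) : Set (Fin n → ℝ) := {u | ∀ p ∈ S, p.1 ⬝ᵥ u ≤ 0}

open Classical in
noncomputable def FM {n : ℕ} (S : Sys (n + 1)) : Sys n :=
  (S.filter (fun p => p.1 0 = 0)).image (fun p => (Matrix.vecTail p.1, p.2)) ∪
  ((S ×ˢ S).filter (fun r => 0 < r.1.1 0 ∧ r.2.1 0 < 0)).image
    (fun r => (r.1.1 0 • Matrix.vecTail r.2.1 - r.2.1 0 • Matrix.vecTail r.1.1,
      r.1.1 0 * r.2.2 - r.2.1 0 * r.1.2))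

lemma forall_FM {n : ℕ} (S : Sys (n + 1)) (φ : (Fin n → ℝ) × ℝ → Prop) :
    (∀ p ∈ FM S, φ p) ↔ (∀ p ∈ S, p.1 0 = 0 → φ (Matrix.vecTail p.1, p.2)) ∧
      (∀ p ∈ S, ∀ q ∈ S, 0 < p.1 0 → q.1 0 < 0 →
        φ (p.1 0 • Matrix.vecTail q.1 - q.1 0 • Matrix.vecTail p.1,
          p.1 0 * q.2 - q.1 0 * p.2)) := by
  constructor
  · intro h
    constructor
    · intro p hp h0
      apply h
      unfold FM
      rw [Finset.mem_union]; left
      exact Finset.mem_image.2 ⟨p, by simp [hp, h0], rfl⟩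
    · intro p hp q hq h1 h2
      apply h
      unfold FM
      rw [Finset.mem_union]; right
      exact Finset.mem_image.2 ⟨(p, q), by simp [hp, hq, h1, h2], rfl⟩
  · rintro ⟨h1, h2⟩ p hp
    unfold FM at hp
    rw [Finset.mem_union, Finset.mem_image, Finset.mem_image] at hp
    rcases hp with ⟨q, hq, rfl⟩ | ⟨⟨q, r⟩, hq, rfl⟩
    · rw [Finset.mem_filter] at hq
      exact h1 q hq.1 hq.2
    · rw [Finset.mem_filter, Finset.mem_product] at hq
      exact h2 q hq.1.1 r hq.1.2 hq.2.1 hq.2.2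

lemma dot_cons {n : ℕ} (d : Fin (n + 1) → ℝ) (t : ℝ) (y : Fin n → ℝ) :
    d ⬝ᵥ (Matrix.vecCons t y) = d 0 * t + Matrix.vecTail d ⬝ᵥ y := by
  rw [Matrix.dotProduct_cons]; rfl

lemma mem_PQ_FM {n : ℕ} (S : Sys (n + 1)) (y : Fin n → ℝ) :
    y ∈ PQ (FM S) ↔ ∃ t, Matrix.vecCons t y ∈ PQ S := by
  have h := fm_core S (fun p => p.1 0) (fun p => p.2 - Matrix.vecTail p.1 ⬝ᵥ y)
  have e : (∃ t, Matrix.vecCons t y ∈ PQ S) ↔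
      ∃ t, ∀ p ∈ S, p.1 0 * t ≤ p.2 - Matrix.vecTail p.1 ⬝ᵥ y := by
    simp only [PQ, Set.mem_ofPred_eq, dot_cons, le_sub_iff_add_le]
  rw [e, h]
  simp only [PQ, Set.mem_ofPred_eq, forall_FM, sub_nonneg]
  refine and_congr Iff.rfl ?_
  refine forall₅_congr fun p _ q _ _ => forall_congr' fun _ => ?_
  simp only [sub_dotProduct, smul_dotProduct, smul_eq_mul]
  constructor <;> intro h <;> linarith

lemma mem_PC_FM {n : ℕ} (S : Sys (n + 1)) (y : Fin n → ℝ) :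
    y ∈ PC (FM S) ↔ ∃ t, Matrix.vecCons t y ∈ PC S := by
  have h := fm_core S (fun p => p.1 0) (fun p => 0 - Matrix.vecTail p.1 ⬝ᵥ y)
  have e : (∃ t, Matrix.vecCons t y ∈ PC S) ↔
      ∃ t, ∀ p ∈ S, p.1 0 * t ≤ 0 - Matrix.vecTail p.1 ⬝ᵥ y := by
    simp only [PC, Set.mem_ofPred_eq, dot_cons, le_sub_iff_add_le]
  rw [e, h]
  simp only [PC, Set.mem_ofPred_eq, forall_FM, sub_nonneg]
  refine and_congr Iff.rfl ?_
  refine forall₅_congr fun p _ q _ _ => forall_congr' fun _ => ?_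
  simp only [sub_dotProduct, smul_dotProduct, smul_eq_mul]
  constructor <;> intro h <;> linarith

noncomputable def sg {n : ℕ} (S : Sys (n + 1)) : ℤ :=
  indZ (∃ p ∈ S, 0 < p.1 0) - indZ (∀ p ∈ S, 0 ≤ p.1 0)

/-- compactly supported Euler characteristic -/
noncomputable def eul : (n : ℕ) → Sys n → ℤ
  | 0, S => indZ (0 ∈ PQ S)
  | (n + 1), S => sg S * eul n (FM S)

lemma fiber_eval {n : ℕ} (S : Sys (n + 1)) (y : Fin n → ℝ) :
    let J : Set ℝ := {t | Matrix.vecCons t y ∈ PQ S}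
    indZ (∃ t, IsGreatest J t) - indZ (J.Nonempty ∧ ¬ BddBelow J)
      = sg S * indZ (y ∈ PQ (FM S)) := by
  intro J
  have hJ : ∀ t, t ∈ J ↔ ∀ p ∈ S, p.1 0 * t + Matrix.vecTail p.1 ⬝ᵥ y ≤ p.2 := by
    intro t; simp only [J, PQ, Set.mem_ofPred_eq, dot_cons]
  have hcl : IsClosed J := by
    have : J = ⋂ p ∈ S, {t : ℝ | p.1 0 * t + Matrix.vecTail p.1 ⬝ᵥ y ≤ p.2} := by
      ext t; simp only [hJ, Set.mem_iInter, Set.mem_ofPred_eq]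
    rw [this]
    refine isClosed_biInter fun p _ => isClosed_le (by fun_prop) continuous_const
  by_cases hne : J.Nonempty
  · have hy : y ∈ PQ (FM S) := (mem_PQ_FM S y).2 hne
    rw [indZ_true hy, mul_one, sg]
    obtain ⟨t₀, ht₀⟩ := hne
    have ht₁ := (hJ t₀).1 ht₀
    congr 1
    · apply indZ_congr
      constructor
      · rintro ⟨t, ht⟩
        by_contra! hcon
        have : t + 1 ∈ J := by
          rw [hJ]
          intro p hp
          have h1 := (hJ t).1 ht.1 p hp
          have h2 := hcon p hp
          linarith
        have := ht.2 this
        linarith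
      · rintro ⟨p, hp, hp0⟩
        have hb : BddAbove J := by
          refine ⟨(p.2 - Matrix.vecTail p.1 ⬝ᵥ y) / p.1 0, fun t ht => ?_⟩
          rw [le_div_iff₀ hp0]
          have := (hJ t).1 ht p hp
          linarith
        exact ⟨_, hcl.isGreatest_csSup ⟨t₀, ht₀⟩ hb⟩
    · apply indZ_congr
      constructor
      · rintro ⟨_, hb⟩
        by_contra! hcon
        obtain ⟨p, hp, hp0⟩ := hcon
        apply hb
        refine ⟨(p.2 - Matrix.vecTail p.1 ⬝ᵥ y) / p.1 0, fun t ht => ?_⟩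
        rw [div_le_iff_of_neg hp0]
        have := (hJ t).1 ht p hp
        linarith
      · intro h
        refine ⟨⟨t₀, ht₀⟩, ?_⟩
        rw [not_bddBelow_iff]
        intro x
        refine ⟨min t₀ (x - 1), ?_, by have := min_le_right t₀ (x - 1); linarith⟩
        rw [hJ]
        intro p hp
        have h1 := ht₁ p hp
        have h2 := mul_le_mul_of_nonneg_left (min_le_left t₀ (x - 1)) (h p hp)
        linarith
  · have hy : ¬ y ∈ PQ (FM S) := fun h => hne ((mem_PQ_FM S y).1 h)
    have hg : ¬ ∃ t, IsGreatest J t := by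
      rintro ⟨t, ht⟩
      exact hne ⟨t, ht.1⟩
    have hb : ¬ (J.Nonempty ∧ ¬ BddBelow J) := fun h => hne h.1
    rw [indZ_false hy, indZ_false hg, indZ_false hb]
    simp

lemma eul_linear {n : ℕ} : ∀ {ι : Type} (s : Finset ι) (c : ι → ℤ) (S : ι → Sys n)
    (_ : ∀ u, ∑ j ∈ s, c j * indZ (u ∈ PQ (S j)) = 0),
    ∑ j ∈ s, c j * eul n (S j) = 0 := by
  induction n with
  | zero => intro ι s c S h; exact h 0
  | succ n ih =>
    intro ι s c S h
    have := ih s (fun j => c j * sg (S j)) (fun j => FM (S j)) ?_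
    · rw [← this]
      exact Finset.sum_congr rfl fun j _ => by rw [eul]; ring
    · intro y
      have h1 := one_dim s c (fun j => {t | Matrix.vecCons t y ∈ PQ (S j)}) ?_ ?_
        (fun t => h (Matrix.vecCons t y))
      · rw [← h1]
        refine Finset.sum_congr rfl fun j _ => ?_
        rw [fiber_eval (S j) y]; ring
      · intro j
        have : {t | Matrix.vecCons t y ∈ PQ (S j)} =
            ⋂ p ∈ S j, {t : ℝ | p.1 0 * t + Matrix.vecTail p.1 ⬝ᵥ y ≤ p.2} := by
          ext t; simp only [PQ, dot_cons, Set.mem_iInter, Set.mem_ofPred_eq]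
        rw [this]
        refine isClosed_biInter fun p _ => isClosed_le (by fun_prop) continuous_const
      · intro j
        refine ⟨fun a ha b hb t ht p hp => ?_⟩
        have h1 := ha p hp
        have h2 := hb p hp
        rw [dot_cons] at h1 h2 ⊢
        rcases le_total 0 (p.1 0) with h0 | h0
        · have := mul_le_mul_of_nonneg_left ht.2 h0
          linarith
        · have := mul_le_mul_of_nonpos_left ht.1 h0
          linarith

lemma eul_zero {n : ℕ} (S : Sys n) (d : Fin n → ℝ) (h1 : d ∈ PC S) (h2 : -d ∉ PC S) :
    eul n S = 0 := by
  induction n with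
  | zero => exact absurd (by rwa [Subsingleton.elim (-d) d]) h2
  | succ n ih =>
    rw [eul]
    by_cases hs : sg S = 0
    · rw [hs, zero_mul]
    have hd : d = Matrix.vecCons (d 0) (Matrix.vecTail d) := (Matrix.cons_head_tail d).symm
    rw [ih (FM S) (Matrix.vecTail d), mul_zero]
    · exact (mem_PC_FM _ _).2 ⟨d 0, by rwa [← hd]⟩
    · intro h
      obtain ⟨t, ht⟩ := (mem_PC_FM _ _).1 h
      apply h2
      have key : ∀ p ∈ S, p.1 0 * (d 0 + t) ≤ 0 := by
        intro p hp
        have e1 := h1 p hp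
        have e2 := ht p hp
        rw [hd, dot_cons] at e1
        rw [dot_cons, dotProduct_neg] at e2
        linarith
      have key2 : ∀ p ∈ S, p.1 0 * (d 0 + t) = 0 := by
        by_cases hA : ∃ p ∈ S, 0 < p.1 0
        · by_cases hB : ∀ p ∈ S, 0 ≤ p.1 0
          · exact absurd (by rw [sg, indZ_true hA, indZ_true hB]; rfl) hs
          · push Not at hB
            obtain ⟨p, hp, hp0⟩ := hA
            obtain ⟨q, hq, hq0⟩ := hB
            have e1 := key p hp
            have e2 := key q hq
            have : d 0 + t = 0 := by
              apply le_antisymm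
              · by_contra! hc
                have := mul_pos hp0 hc
                linarith
              · by_contra! hc
                have := mul_pos_of_neg_of_neg hq0 hc
                linarith
            intro r _; rw [this, mul_zero]
        · by_cases hB : ∀ p ∈ S, 0 ≤ p.1 0
          · push Not at hA
            intro p hp
            rw [le_antisymm (hA p hp) (hB p hp), zero_mul]
          · exact absurd (by rw [sg, indZ_false hA, indZ_false hB]; rfl) hs
      intro p hp
      have e2 := ht p hp
      have e3 := key2 p hp
      rw [dot_cons, dotProduct_neg] at e2
      rw [dotProduct_neg, hd, dot_cons]
      linarith

lemma eul_one {n : ℕ} (S : Sys n) (h1 : ∀ d ∈ PC S, d = 0) (h2 : (PQ S).Nonempty) :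
    eul n S = 1 := by
  induction n with
  | zero =>
    obtain ⟨u, hu⟩ := h2
    exact indZ_true (by rwa [Subsingleton.elim u 0] at hu)
  | succ n ih =>
    rw [eul, ih (FM S)]
    · rw [mul_one, sg, indZ_true, indZ_false]
      · rfl
      · intro h
        have : Matrix.vecCons (-1 : ℝ) (0 : Fin n → ℝ) ∈ PC S := by
          intro p hp
          rw [dot_cons, dotProduct_zero]
          have := h p hp
          linarith
        have := congrFun (h1 _ this) 0
        simp at this
      · by_contra! h
        have : Matrix.vecCons (1 : ℝ) (0 : Fin n → ℝ) ∈ PC S := by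
          intro p hp
          rw [dot_cons, dotProduct_zero]
          have := h p hp
          linarith
        have := congrFun (h1 _ this) 0
        simp at this
    · intro d hd
      obtain ⟨t, ht⟩ := (mem_PC_FM _ _).1 hd
      have := h1 _ ht
      funext i
      simpa using congrFun this i.succ
    · obtain ⟨u, hu⟩ := h2
      exact ⟨Matrix.vecTail u, (mem_PQ_FM _ _).2 ⟨u 0, by
        rwa [show Matrix.vecCons (u 0) (Matrix.vecTail u) = u from Matrix.cons_head_tail u]⟩⟩

lemma eul_empty (n : ℕ) : eul n ∅ = (-1) ^ n := by
  induction n with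
  | zero => exact indZ_true (by simp [PQ])
  | succ n ih =>
    have : FM (∅ : Sys (n + 1)) = ∅ := by simp [FM]
    rw [eul, this, ih, sg, indZ_false (by simp), indZ_true (by simp), pow_succ]
    ring

lemma exists_dot {n : ℕ} (g : (Fin n → ℝ) →ₗ[ℝ] ℝ) : ∃ u : Fin n → ℝ, ∀ y, g y = u ⬝ᵥ y := by
  refine ⟨(dotProductEquiv ℝ (Fin n)).symm g, fun y => ?_⟩
  rw [← dotProductEquiv_apply_apply, LinearEquiv.apply_symm_apply]

lemma exists_support {n : ℕ} {A : Set (Fin n → ℝ)} (hA : Convex ℝ A) {x : Fin n → ℝ}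
    (hx : x ∈ A) (hxi : x ∉ intrinsicInterior ℝ A) :
    ∃ u : Fin n → ℝ, (∀ y ∈ A, u ⬝ᵥ y ≤ u ⬝ᵥ x) ∧ ∃ y ∈ A, u ⬝ᵥ y < u ⬝ᵥ x := by
  let p : affineSpan ℝ A := ⟨x, subset_affineSpan _ _ hx⟩
  have : Nonempty (affineSpan ℝ A) := ⟨p⟩
  let φ := (AffineIsometryEquiv.vaddConst ℝ p).toHomeomorph
  have hφ : ∀ d, ((φ d : affineSpan ℝ A) : Fin n → ℝ) = (d : Fin n → ℝ) + x := fun d => rfl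
  set B : Set (affineSpan ℝ A).direction := φ ⁻¹' ((↑) ⁻¹' A) with hB
  have hmem : ∀ d, d ∈ B ↔ (d : Fin n → ℝ) + x ∈ A := fun d => Iff.rfl
  have hBc : Convex ℝ B := by
    intro d hd e he s t hs ht hst
    rw [hmem] at hd he ⊢
    have := hA hd he hs ht hst
    convert this using 1
    push_cast
    calc _ = s • (d : Fin n → ℝ) + t • (e : Fin n → ℝ) + (s + t) • x := by rw [hst, one_smul]
      _ = _ := by module
  have hint : φ ⁻¹' interior ((↑) ⁻¹' A) = interior B := φ.preimage_interior _
  have h0 : (0 : (affineSpan ℝ A).direction) ∉ interior B := by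
    rw [← hint]
    intro h
    apply hxi
    rw [mem_intrinsicInterior]
    refine ⟨φ 0, h, ?_⟩
    rw [hφ]; simp
  have hne : (interior B).Nonempty := by
    obtain ⟨y, hy⟩ := Set.Nonempty.intrinsicInterior hA ⟨x, hx⟩
    rw [mem_intrinsicInterior] at hy
    obtain ⟨z, hz, rfl⟩ := hy
    refine ⟨φ.symm z, ?_⟩
    rw [← hint, Set.mem_preimage, φ.apply_symm_apply]
    exact hz
  obtain ⟨f, hf⟩ := geometric_hahn_banach_open_point hBc.interior isOpen_interior h0
  rw [map_zero] at hf
  have hf' : ∀ b ∈ B, f b ≤ 0 := by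
    intro b hb
    apply closure_minimal (fun z hz => le_of_lt (hf z hz)) <| isClosed_Iic.preimage f.continuous
    rw [hBc.closure_interior_eq_closure_of_nonempty_interior hne]
    exact subset_closure hb
  obtain ⟨g, hg⟩ := LinearMap.exists_extend (f : (affineSpan ℝ A).direction →ₗ[ℝ] ℝ)
  obtain ⟨u, hu⟩ := exists_dot g
  have hgf : ∀ d : (affineSpan ℝ A).direction, u ⬝ᵥ (d : Fin n → ℝ) = f d := by
    intro d
    rw [← hu]
    exact congrArg (fun k => k d) hg
  refine ⟨u, fun y hy => ?_, ?_⟩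
  · have hd : y - x ∈ (affineSpan ℝ A).direction :=
      AffineSubspace.vsub_mem_direction (subset_affineSpan _ _ hy) (subset_affineSpan _ _ hx)
    have := hf' ⟨y - x, hd⟩ (by rw [hmem]; simpa using hy)
    rw [← hgf, dotProduct_sub] at this
    linarith
  · obtain ⟨b, hb⟩ := hne
    refine ⟨b + x, (hmem b).1 (interior_subset hb), ?_⟩
    have := hf b hb
    rw [← hgf] at this
    rw [dotProduct_add]
    linarith

lemma mem_interior_of_full {n : ℕ} {A : Set (Fin n → ℝ)}
    (hd : Module.finrank ℝ (affineSpan ℝ A).direction = n) {x : Fin n → ℝ}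
    (hx : x ∈ intrinsicInterior ℝ A) : x ∈ interior A := by
  have h1 : (affineSpan ℝ A).direction = ⊤ := by
    apply Submodule.eq_top_of_finrank_eq
    rw [hd]; simp
  have h2 : affineSpan ℝ A = ⊤ := by
    rw [← AffineSubspace.direction_eq_top_iff_of_nonempty]
    · exact h1
    · exact ⟨x, subset_affineSpan _ _ (intrinsicInterior_subset hx)⟩
  have ho : IsOpen (affineSpan ℝ A : Set (Fin n → ℝ)) := by
    rw [h2]; exact isOpen_univ
  have h3 : IsOpen (intrinsicInterior ℝ A) := ho.isOpenMap_subtype_val _ isOpen_interior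
  exact interior_maximal intrinsicInterior_subset h3 hx

lemma eq_zero_of_interior {n : ℕ} {A : Set (Fin n → ℝ)} {x : Fin n → ℝ} (hx : x ∈ interior A)
    (u : Fin n → ℝ) (hu : ∀ y ∈ A, u ⬝ᵥ y ≤ u ⬝ᵥ x) : u = 0 := by
  have h1 : Filter.Tendsto (fun t : ℝ => x + t • u) (nhds 0) (nhds x) := by
    have : Continuous (fun t : ℝ => x + t • u) := by fun_prop
    simpa using this.tendsto 0
  have h2 : ∀ᶠ t : ℝ in nhdsWithin 0 (Set.Ioi 0), x + t • u ∈ A :=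
    nhdsWithin_le_nhds (h1 (mem_interior_iff_mem_nhds.1 hx))
  obtain ⟨t, ht, ht0⟩ := (h2.and self_mem_nhdsWithin).exists
  have h3 := hu _ ht
  rw [dotProduct_add, dotProduct_smul, smul_eq_mul] at h3
  have ht0 : 0 < t := ht0
  have h4 : 0 ≤ u ⬝ᵥ u := Finset.sum_nonneg fun i _ => mul_self_nonneg (u i)
  rw [← dotProduct_self_eq_zero]
  apply le_antisymm _ h4
  by_contra! hc
  have := mul_pos ht0 hc
  linarith

lemma sum_upd {κ E M : Type*} [DecidableEq κ] [AddCommGroup M] (I : Finset κ) (F : κ → E → M)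
    (g : κ → E) (i : κ) (hi : i ∈ I) (y : E) :
    ∑ j ∈ I, F j (Function.update g i y j) = ∑ j ∈ I, F j (g j) + (F i y - F i (g i)) := by
  rw [← Finset.add_sum_erase _ _ hi, ← Finset.add_sum_erase I (fun j => F j (g j)) hi,
    Function.update_self, Finset.sum_congr rfl (g := fun j => F j (g j))]
  · abel
  · intro j hj
    rw [Function.update_of_ne (Finset.ne_of_mem_erase hj)]

lemma mem_sum {n m : ℕ} (P : Fin m → Set (Fin n → ℝ)) (hne : ∀ i, (P i).Nonempty)
    (I : Finset (Fin m)) (x : Fin n → ℝ) :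
    x ∈ ∑ i ∈ I, P i ↔ ∃ g : Fin m → Fin n → ℝ, (∀ i, g i ∈ P i) ∧ ∑ i ∈ I, g i = x := by
  classical
  rw [Set.mem_finsetSum]
  constructor
  · rintro ⟨g, hg, rfl⟩
    choose w hw using hne
    refine ⟨fun i => if i ∈ I then g i else w i, fun i => ?_, ?_⟩
    · by_cases h : i ∈ I
      · simpa [h] using hg h
      · simpa [h] using hw i
    · exact Finset.sum_congr rfl fun i hi => by simp [hi]
  · rintro ⟨g, hg, rfl⟩
    exact ⟨g, fun {i} _ => hg i, rfl⟩

/-- `g` is an optimal decomposition of `x`. -/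
def IsOpt {n m : ℕ} (P : Fin m → Set (Fin n → ℝ)) (a : Fin m → Fin n → ℝ) (I : Finset (Fin m))
    (x : Fin n → ℝ) (g : Fin m → Fin n → ℝ) : Prop :=
  (∀ i, g i ∈ P i) ∧ ∑ i ∈ I, g i = x ∧ ∀ h : Fin m → Fin n → ℝ, (∀ i, h i ∈ P i) →
    ∑ i ∈ I, h i = x → ∑ i ∈ I, a i ⬝ᵥ h i ≤ ∑ i ∈ I, a i ⬝ᵥ g i

lemma exists_opt {n m : ℕ} (P : Fin m → Set (Fin n → ℝ)) (hne : ∀ i, (P i).Nonempty)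
    (hc : ∀ i, IsCompact (P i)) (a : Fin m → Fin n → ℝ) (I : Finset (Fin m))
    (x : Fin n → ℝ) (hx : x ∈ ∑ i ∈ I, P i) : ∃ g, IsOpt P a I x g := by
  obtain ⟨g₀, hg₀, hg₁⟩ := (mem_sum P hne I x).1 hx
  have hK : IsCompact (Set.pi Set.univ P ∩ {g | ∑ i ∈ I, g i = x}) :=
    (isCompact_univ_pi hc).inter_right (isClosed_eq (by fun_prop) continuous_const)
  have hcont : Continuous (fun g : Fin m → Fin n → ℝ => ∑ i ∈ I, a i ⬝ᵥ g i) := by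
    unfold dotProduct; fun_prop
  obtain ⟨g, hg, hmax⟩ := hK.exists_isMaxOn ⟨g₀, fun i _ => hg₀ i, hg₁⟩ hcont.continuousOn
  refine ⟨g, fun i => hg.1 i trivial, hg.2, fun h h1 h2 => ?_⟩
  exact hmax (show h ∈ _ from ⟨fun i _ => h1 i, h2⟩)

lemma exists_dual {n m : ℕ} (P : Fin m → Set (Fin n → ℝ)) (hne : ∀ i, (P i).Nonempty)
    (hc : ∀ i, IsCompact (P i)) (hcv : ∀ i, Convex ℝ (P i))
    (a : Fin m → Fin n → ℝ) (I : Finset (Fin m))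
    (x : Fin n → ℝ) (hx : x ∈ interior (∑ i ∈ I, P i)) (g) (hg : IsOpt P a I x g) :
    ∃ u : Fin n → ℝ, ∀ i ∈ I, ∀ y ∈ P i, (u + a i) ⬝ᵥ y ≤ (u + a i) ⬝ᵥ g i := by
  classical
  set A := ∑ i ∈ I, P i with hAdef
  let S : Set ((Fin n → ℝ) × ℝ) := {z | ∃ h : Fin m → Fin n → ℝ, (∀ i, h i ∈ P i) ∧
    ∑ i ∈ I, h i = z.1 ∧ z.2 ≤ ∑ i ∈ I, a i ⬝ᵥ h i}
  set γ := ∑ i ∈ I, a i ⬝ᵥ g i with hγ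
  have hS : Convex ℝ S := by
    rintro z ⟨h, h1, h2, h3⟩ w ⟨k, k1, k2, k3⟩ s t hs ht hst
    refine ⟨fun i => s • h i + t • k i, fun i => hcv i (h1 i) (k1 i) hs ht hst, ?_, ?_⟩
    · rw [Finset.sum_add_distrib, ← Finset.smul_sum, ← Finset.smul_sum, h2, k2]; rfl
    · simp only [dotProduct_add, dotProduct_smul, Finset.sum_add_distrib, ← Finset.smul_sum]
      exact add_le_add (mul_le_mul_of_nonneg_left h3 hs) (mul_le_mul_of_nonneg_left k3 ht)
  have hnot : (x, γ) ∉ interior S := by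
    intro hin
    have h1 : Filter.Tendsto (fun t : ℝ => (x, γ + t)) (nhds 0) (nhds (x, γ)) := by
      have : Continuous (fun t : ℝ => (x, γ + t)) := by fun_prop
      simpa using this.tendsto 0
    have h2 : ∀ᶠ t : ℝ in nhdsWithin 0 (Set.Ioi 0), (x, γ + t) ∈ S :=
      nhdsWithin_le_nhds (h1 (mem_interior_iff_mem_nhds.1 hin))
    obtain ⟨t, ⟨h, e1, e2, e3⟩, ht0⟩ := (h2.and self_mem_nhdsWithin).exists
    have ht0 : 0 < t := ht0
    have := hg.2.2 h e1 e2
    simp only at e3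
    linarith
  have hSne : (interior S).Nonempty := by
    have hcont : Continuous (fun g : Fin m → Fin n → ℝ => ∑ i ∈ I, a i ⬝ᵥ g i) := by
      unfold dotProduct; fun_prop
    obtain ⟨k, hk, hmin⟩ := (isCompact_univ_pi hc).exists_isMinOn
      ⟨g, fun i _ => hg.1 i⟩ hcont.continuousOn
    set μ := ∑ i ∈ I, a i ⬝ᵥ k i
    have hsub : interior A ×ˢ Set.Iio μ ⊆ S := by
      rintro ⟨y, t⟩ ⟨hy, ht⟩
      obtain ⟨h, h1, h2⟩ := (mem_sum P hne I y).1 (interior_subset hy)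
      refine ⟨h, h1, h2, ?_⟩
      have h3 : μ ≤ ∑ i ∈ I, a i ⬝ᵥ h i := hmin (show h ∈ _ from fun i _ => h1 i)
      exact le_trans (le_of_lt ht) h3
    exact ⟨(x, μ - 1), interior_maximal hsub (isOpen_interior.prod isOpen_Iio)
      ⟨hx, by simp⟩⟩
  obtain ⟨f, hf0, hf⟩ := geometric_hahn_banach_of_nonempty_interior_point hS hnot hSne
  obtain ⟨u, hu⟩ := exists_dot ((f : (Fin n → ℝ) × ℝ →ₗ[ℝ] ℝ) ∘ₗ LinearMap.inl ℝ (Fin n → ℝ) ℝ)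
  set s := f (0, 1) with hs
  have hfe : ∀ y t, f (y, t) = u ⬝ᵥ y + s * t := by
    intro y t
    rw [← hu]
    have : ((y, t) : (Fin n → ℝ) × ℝ) = (y, 0) + t • (0, 1) := by simp
    rw [this, map_add, map_smul, smul_eq_mul, mul_comm]
    rfl
  have hs0 : 0 ≤ s := by
    have := hf (x, γ - 1) ⟨g, hg.1, hg.2.1, by simp [hγ]⟩
    rw [hfe, hfe] at this
    linarith
  have hspos : 0 < s := by
    rcases hs0.lt_or_eq with h | h
    · exact h
    exfalso
    have hu0 : u = 0 := by
      apply eq_zero_of_interior hx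
      intro y hy
      obtain ⟨h', h1, h2⟩ := (mem_sum P hne I y).1 hy
      have := hf (y, ∑ i ∈ I, a i ⬝ᵥ h' i) ⟨h', h1, h2, le_rfl⟩
      rw [hfe, hfe, ← h] at this
      linarith
    apply hf0
    ext z
    · simp [hfe, hu0]
    · simp [hfe, ← h]
  refine ⟨s⁻¹ • u, fun i hi y hy => ?_⟩
  have h1 := hf (∑ j ∈ I, Function.update g i y j, ∑ j ∈ I, a j ⬝ᵥ Function.update g i y j)
    ⟨Function.update g i y, fun j => ?_, rfl, le_rfl⟩
  · rw [hfe, hfe, sum_upd I (fun _ z => z) g i hi y,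
      sum_upd I (fun j z => a j ⬝ᵥ z) g i hi y, hg.2.1, dotProduct_add, dotProduct_sub] at h1
    rw [add_dotProduct, add_dotProduct, smul_dotProduct, smul_dotProduct, smul_eq_mul, smul_eq_mul]
    have h2 : u ⬝ᵥ y - u ⬝ᵥ g i ≤ s * (a i ⬝ᵥ g i - a i ⬝ᵥ y) := by linarith
    have h3 := mul_le_mul_of_nonneg_left h2 (inv_nonneg.2 hs0)
    rw [inv_mul_cancel_left₀ hspos.ne'] at h3
    linarith
  · by_cases h : j = i
    · subst h; simpa using hy
    · simpa [h] using hg.1 j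

lemma exists_generic {n : ℕ} (V : Fin (n + 1) → Finset (Fin n → ℝ)) :
    ∃ a : Fin (n + 1) → Fin n → ℝ, ∀ u : Fin n → ℝ, ∃ i, ∀ v ∈ V i, ∀ w ∈ V i, v ≠ w →
      (u + a i) ⬝ᵥ v ≠ (u + a i) ⬝ᵥ w := by
  classical
  let D : Finset (Fin (n + 1) → Fin n → ℝ) := Fintype.piFinset fun i =>
    ((V i ×ˢ V i).filter fun r => r.1 ≠ r.2).image fun r => r.1 - r.2
  let L : (Fin (n + 1) → Fin n → ℝ) → ((Fin n → ℝ) →ₗ[ℝ] (Fin (n + 1) → ℝ)) := fun d =>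
    LinearMap.pi fun i => dotProductEquiv ℝ (Fin n) (d i)
  let T : (Fin (n + 1) → Fin n → ℝ) →
      ((Fin (n + 1) → Fin n → ℝ) →ₗ[ℝ] (Fin (n + 1) → ℝ)) := fun d =>
    LinearMap.pi fun i => (dotProductEquiv ℝ (Fin n) (d i)) ∘ₗ LinearMap.proj i
  have hL : ∀ d u i, L d u i = d i ⬝ᵥ u := fun d u i => rfl
  have hT : ∀ d a i, T d a i = d i ⬝ᵥ a i := fun d a i => rfl
  let s : Finset (Subspace ℝ (Fin (n + 1) → Fin n → ℝ)) :=
    D.image fun d => Submodule.comap (T d) (LinearMap.range (L d))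
  have hs : ⊤ ∉ s := by
    intro h
    obtain ⟨d, hd, he⟩ := Finset.mem_image.1 h
    have hd0 : ∀ i, d i ≠ 0 := by
      intro i h0
      have := Fintype.mem_piFinset.1 hd i
      obtain ⟨r, hr, hre⟩ := Finset.mem_image.1 this
      rw [Finset.mem_filter] at hr
      rw [h0] at hre
      exact hr.2 (sub_eq_zero.1 hre)
    have hsurj : Function.Surjective (L d) := by
      intro b
      let a : Fin (n + 1) → Fin n → ℝ := fun i => (b i / (d i ⬝ᵥ d i)) • d i
      have ha : a ∈ Submodule.comap (T d) (LinearMap.range (L d)) := by rw [he]; trivial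
      obtain ⟨u, hu⟩ := ha
      refine ⟨u, ?_⟩
      rw [hu]
      funext i
      rw [hT, dotProduct_smul, smul_eq_mul, div_mul_cancel₀]
      exact fun h => hd0 i (dotProduct_self_eq_zero.1 h)
    have := LinearMap.finrank_le_finrank_of_surjective hsurj
    simp at this
  have hcov := Subspace.biUnion_ne_univ_of_top_notMem hs
  obtain ⟨a, ha⟩ := (Set.ne_univ_iff_exists_notMem _).1 hcov
  refine ⟨a, fun u => ?_⟩
  by_contra! hcon
  choose v hv w hw hvw heq using hcon
  apply ha
  rw [Set.mem_iUnion₂]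
  have hd : (fun i => v i - w i) ∈ D := by
    rw [Fintype.mem_piFinset]
    intro i
    exact Finset.mem_image.2 ⟨(v i, w i), by simp [hv i, hw i, hvw i], rfl⟩
  refine ⟨_, Finset.mem_image_of_mem _ hd, -u, ?_⟩
  funext i
  rw [hL, hT]
  have := heq i
  rw [add_dotProduct, add_dotProduct] at this
  rw [dotProduct_neg, sub_dotProduct, sub_dotProduct, dotProduct_comm _ u, dotProduct_comm _ u,
    dotProduct_comm _ (a i), dotProduct_comm _ (a i)]
  linarith

lemma exists_unique_max {n : ℕ} (V : Finset (Fin n → ℝ)) (hV : V.Nonempty) (c : Fin n → ℝ)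
    (hc : ∀ v ∈ V, ∀ w ∈ V, v ≠ w → c ⬝ᵥ v ≠ c ⬝ᵥ w) :
    ∃ v ∈ V, ∀ y ∈ convexHull ℝ (V : Set (Fin n → ℝ)), y = v ∨ c ⬝ᵥ y < c ⬝ᵥ v := by
  obtain ⟨v, hv, hmax⟩ := Finset.exists_max_image V (fun v => c ⬝ᵥ v) hV
  refine ⟨v, hv, fun y hy => ?_⟩
  have hconv : Convex ℝ {y | y = v ∨ c ⬝ᵥ y < c ⬝ᵥ v} := by
    intro y hy z hz s t hs ht hst
    have hle : ∀ y ∈ {y | y = v ∨ c ⬝ᵥ y < c ⬝ᵥ v}, c ⬝ᵥ y ≤ c ⬝ᵥ v := by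
      rintro y (rfl | h)
      · exact le_rfl
      · exact h.le
    have hly := hle y hy
    have hlz := hle z hz
    rcases hs.lt_or_eq with hs' | rfl
    · rcases ht.lt_or_eq with ht' | rfl
      · by_cases hyz : y = v ∧ z = v
        · left
          rw [hyz.1, hyz.2, ← add_smul, hst, one_smul]
        · right
          rw [dotProduct_add, dotProduct_smul, dotProduct_smul, smul_eq_mul, smul_eq_mul]
          have e : c ⬝ᵥ v = s * (c ⬝ᵥ v) + t * (c ⬝ᵥ v) := by rw [← add_mul, hst, one_mul]
          rw [e]
          have : c ⬝ᵥ y < c ⬝ᵥ v ∨ c ⬝ᵥ z < c ⬝ᵥ v := by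
            rcases hy with h | h
            · rcases hz with h' | h'
              · exact absurd ⟨h, h'⟩ hyz
              · exact Or.inr h'
            · exact Or.inl h
          rcases this with h | h
          · exact add_lt_add_of_lt_of_le (mul_lt_mul_of_pos_left h hs')
              (mul_le_mul_of_nonneg_left hlz ht)
          · exact add_lt_add_of_le_of_lt (mul_le_mul_of_nonneg_left hly hs)
              (mul_lt_mul_of_pos_left h ht')
      · have : s = 1 := by linarith
        subst this; simpa using hy
    · have : t = 1 := by linarith
      subst this; simpa using hz
  refine convexHull_min (fun w hw => ?_) hconv hy
  by_cases h : w = v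
  · exact Or.inl h
  · exact Or.inr (lt_of_le_of_ne (hmax w hw) (hc w hw v hv h))

lemma conv_le {n : ℕ} (V : Finset (Fin n → ℝ)) (c : Fin n → ℝ) (b : ℝ) :
    (∀ v ∈ V, c ⬝ᵥ v ≤ b) ↔ ∀ y ∈ convexHull ℝ (V : Set (Fin n → ℝ)), c ⬝ᵥ y ≤ b := by
  constructor
  · intro h y hy
    have hconv : Convex ℝ {y | c ⬝ᵥ y ≤ b} :=
      convex_halfSpace_le (dotProductEquiv ℝ (Fin n) c).isLinear b
    exact convexHull_min (fun w hw => h w hw) hconv hy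
  · intro h v hv
    exact h v (subset_convexHull _ _ hv)

lemma finite_lattice {n : ℕ} (A : Set (Fin n → ℝ)) (hA : IsCompact A) :
    {x | IsLatticePt x ∧ x ∈ A}.Finite := by
  obtain ⟨R, hR⟩ := hA.isBounded.exists_norm_le
  have hfin : (Set.Icc (fun _ : Fin n => -⌈R⌉) (fun _ => ⌈R⌉)).Finite := Set.finite_Icc _ _
  refine (hfin.image (fun z : Fin n → ℤ => fun i => (z i : ℝ))).subset ?_
  rintro x ⟨hx, hxA⟩
  choose z hz using hx
  refine ⟨z, ⟨fun i => ?_, fun i => ?_⟩, (funext hz).symm⟩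
  all_goals
    have h1 : |x i| ≤ R := le_trans (norm_le_pi_norm x i) (hR x hxA)
    have h2 := Int.le_ceil R
    rw [abs_le, hz i] at h1
  · have : ((-⌈R⌉ : ℤ) : ℝ) ≤ (z i : ℝ) := by push_cast; linarith
    exact_mod_cast this
  · have : (z i : ℝ) ≤ ((⌈R⌉ : ℤ) : ℝ) := by linarith
    exact_mod_cast this

/-- the lattice points of the face of the Minkowski sum selected by `u` -/
def faceLat {n m : ℕ} (P : Fin m → Set (Fin n → ℝ)) (a : Fin m → Fin n → ℝ) (u : Fin n → ℝ)
    (I : Finset (Fin m)) : Set (Fin n → ℝ) :=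
  {x | IsLatticePt x ∧ ∃ g : Fin m → Fin n → ℝ, (∀ i, g i ∈ P i) ∧
    (∀ i ∈ I, ∀ y ∈ P i, (u + a i) ⬝ᵥ y ≤ (u + a i) ⬝ᵥ g i) ∧ ∑ i ∈ I, g i = x}

lemma IsLatticePt.add {n : ℕ} {x y : Fin n → ℝ} (hx : IsLatticePt x) (hy : IsLatticePt y) :
    IsLatticePt (x + y) := by
  intro i
  obtain ⟨p, hp⟩ := hx i
  obtain ⟨q, hq⟩ := hy i
  exact ⟨p + q, by push_cast; rw [Pi.add_apply, hp, hq]⟩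

lemma IsLatticePt.sub {n : ℕ} {x y : Fin n → ℝ} (hx : IsLatticePt x) (hy : IsLatticePt y) :
    IsLatticePt (x - y) := by
  intro i
  obtain ⟨p, hp⟩ := hx i
  obtain ⟨q, hq⟩ := hy i
  exact ⟨p - q, by push_cast; rw [Pi.sub_apply, hp, hq]⟩

lemma faceLat_insert {n m : ℕ} (P : Fin m → Set (Fin n → ℝ)) (a : Fin m → Fin n → ℝ)
    (u : Fin n → ℝ) (J : Finset (Fin m)) (i : Fin m) (hi : i ∉ J) (v : Fin n → ℝ) (hv : v ∈ P i)
    (hvl : IsLatticePt v) (hmax : ∀ y ∈ P i, y = v ∨ (u + a i) ⬝ᵥ y < (u + a i) ⬝ᵥ v) :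
    faceLat P a u (insert i J) = (fun x => v + x) '' faceLat P a u J := by
  classical
  ext x
  constructor
  · rintro ⟨hx, g, hg, hgm, hgs⟩
    rw [Finset.sum_insert hi] at hgs
    have hgi : g i = v := by
      rcases hmax _ (hg i) with h | h
      · exact h
      · exact absurd (hgm i (Finset.mem_insert_self _ _) v hv) (not_le.2 h)
    rw [hgi] at hgs
    refine ⟨x - v, ⟨hx.sub hvl, g, hg, fun j hj => hgm j (Finset.mem_insert_of_mem hj), ?_⟩, ?_⟩
    · rw [← hgs]; simp
    · simp
  · rintro ⟨x, ⟨hx, g, hg, hgm, rfl⟩, rfl⟩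
    refine ⟨hvl.add hx, Function.update g i v, fun j => ?_, fun j hj y hy => ?_, ?_⟩
    · by_cases h : j = i
      · subst h; simpa using hv
      · simpa [h] using hg j
    · by_cases h : j = i
      · subst h
        rw [Function.update_self]
        rcases hmax y hy with h | h
        · rw [h]
        · exact h.le
      · rw [Function.update_of_ne h]
        exact hgm j ((Finset.mem_insert.1 hj).resolve_left h) y hy
    · rw [Finset.sum_insert hi, Function.update_self]
      congr 1
      refine Finset.sum_congr rfl fun j hj => ?_
      rw [Function.update_of_ne]
      rintro rfl
      exact hi hj

lemma sum_indZ {α : Type*} (X : Finset α) (B : Set α) (hB : ∀ x ∈ B, x ∈ X) :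
    ∑ x ∈ X, indZ (x ∈ B) = (B.ncard : ℤ) := by
  classical
  have : B = ((X.filter fun x => x ∈ B : Finset α) : Set α) := by
    ext x
    simp only [Finset.coe_filter, Set.mem_ofPred_eq]
    exact ⟨fun h => ⟨hB x h, h⟩, fun h => h.2⟩
  conv_rhs => rw [this, Set.ncard_coe_finset, Finset.card_filter]
  push_cast
  refine Finset.sum_congr rfl fun x _ => ?_
  simp [indZ]

lemma faceLat_alternating {n m : ℕ} (P : Fin m → Set (Fin n → ℝ)) (a : Fin m → Fin n → ℝ)
    (u : Fin n → ℝ) (i : Fin m) (v : Fin n → ℝ) (hv : v ∈ P i)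
    (hvl : IsLatticePt v) (hmax : ∀ y ∈ P i, y = v ∨ (u + a i) ⬝ᵥ y < (u + a i) ⬝ᵥ v) :
    ∑ I : Finset (Fin m), (-1 : ℤ) ^ I.card * ((faceLat P a u I).ncard : ℤ) = 0 := by
  classical
  rw [← Finset.powerset_univ, ← Finset.insert_erase (Finset.mem_univ i),
    Finset.sum_powerset_insert (Finset.notMem_erase _ _), ← Finset.sum_add_distrib]
  refine Finset.sum_eq_zero fun J hJ => ?_
  have hi : i ∉ J := fun h => Finset.notMem_erase i _ (Finset.mem_powerset.1 hJ h)
  rw [faceLat_insert P a u J i hi v hv hvl hmax,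
    Set.ncard_image_of_injective _ (add_right_injective v), Finset.card_insert_of_notMem hi]
  ring

/-- an irreducible proper family of n+1 lattice polytopes in ℝ^n has
exactly one relative interior lattice point in its total Minkowski sum. -/
theorem unique_relint_lattice_point_of_irreducible {n : ℕ}
    (P : Fin (n + 1) → Set (Fin n → ℝ)) (hP : ∀ i, IsLatticePolytope (P i))
    (hdim : ∀ i, 1 ≤ adim (P i)) (hsum : adim (∑ i, P i) = n)
    (hhollow : ∀ I : Finset (Fin (n + 1)), I.Nonempty → I ≠ Finset.univ →
      relintLat (∑ i ∈ I, P i) = ∅)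
    (hne : (relintLat (∑ i, P i)).Nonempty) :
    (relintLat (∑ i, P i)).ncard = 1 := by
  classical
  choose V hVne hVl hPV using hP
  have hne' : ∀ i, (P i).Nonempty := fun i => by
    rw [hPV i]; exact (Finset.coe_nonempty.2 (hVne i)).convexHull
  have hc : ∀ i, IsCompact (P i) := fun i => by
    rw [hPV i]; exact (V i).finite_toSet.isCompact_convexHull ℝ
  have hcv : ∀ i, Convex ℝ (P i) := fun i => by
    rw [hPV i]; exact convex_convexHull _ _
  have hsc : ∀ I : Finset (Fin (n + 1)), Convex ℝ (∑ i ∈ I, P i) := by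
    intro I x hx y hy s t hs ht hst
    obtain ⟨g, hg, rfl⟩ := (mem_sum P hne' I x).1 hx
    obtain ⟨h, hh, rfl⟩ := (mem_sum P hne' I y).1 hy
    refine (mem_sum P hne' I _).2 ⟨fun i => s • g i + t • h i,
      fun i => hcv i (hg i) (hh i) hs ht hst, ?_⟩
    rw [Finset.sum_add_distrib, ← Finset.smul_sum, ← Finset.smul_sum]
  have hsK : ∀ I : Finset (Fin (n + 1)), IsCompact (∑ i ∈ I, P i) := by
    intro I
    have h1 : IsCompact (Set.pi Set.univ P) := isCompact_univ_pi hc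
    have h2 := h1.image (f := fun g : Fin (n + 1) → Fin n → ℝ => ∑ i ∈ I, g i) (by fun_prop)
    convert h2 using 1
    ext x
    rw [mem_sum P hne' I x]
    simp [Set.mem_pi]
  obtain ⟨a, ha⟩ := exists_generic V
  have hXfin : (⋃ I : Finset (Fin (n + 1)), {x | IsLatticePt x ∧ x ∈ ∑ i ∈ I, P i}).Finite :=
    Set.finite_iUnion fun I => finite_lattice _ (hsK I)
  set X := hXfin.toFinset with hX
  have hXmem : ∀ x, x ∈ X ↔ IsLatticePt x ∧ ∃ I : Finset (Fin (n + 1)), x ∈ ∑ i ∈ I, P i := by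
    intro x
    rw [hX, Set.Finite.mem_toFinset, Set.mem_iUnion]
    simp
  have hopt : ∀ (I : Finset (Fin (n + 1))) (x : Fin n → ℝ), ∃ g,
      x ∈ ∑ i ∈ I, P i → IsOpt P a I x g := by
    intro I x
    by_cases h : x ∈ ∑ i ∈ I, P i
    · obtain ⟨g, hg⟩ := exists_opt P hne' hc a I x h
      exact ⟨g, fun _ => hg⟩
    · exact ⟨0, fun h' => absurd h' h⟩
  choose G hG using hopt
  let S : Finset (Fin (n + 1)) × (Fin n → ℝ) → Sys n := fun q =>
    q.1.biUnion fun i => (V i).image fun v =>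
      (v - G q.1 q.2 i, -(a i ⬝ᵥ (v - G q.1 q.2 i)))
  have hSall : ∀ q (φ : (Fin n → ℝ) × ℝ → Prop), (∀ p ∈ S q, φ p) ↔ ∀ i ∈ q.1, ∀ v ∈ V i,
      φ (v - G q.1 q.2 i, -(a i ⬝ᵥ (v - G q.1 q.2 i))) := by
    intro q φ
    simp only [S, Finset.mem_biUnion, Finset.mem_image]
    constructor
    · intro h i hi v hv
      exact h _ ⟨i, hi, v, hv, rfl⟩
    · rintro h p ⟨i, hi, v, hv, rfl⟩
      exact h i hi v hv
  have hPQ : ∀ q u, u ∈ PQ (S q) ↔ ∀ i ∈ q.1, ∀ y ∈ P i,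
      (u + a i) ⬝ᵥ y ≤ (u + a i) ⬝ᵥ G q.1 q.2 i := by
    intro q u
    simp only [PQ, Set.mem_ofPred_eq]
    rw [hSall q (fun p => p.1 ⬝ᵥ u ≤ p.2)]
    refine forall₂_congr fun i _ => ?_
    rw [hPV i, ← conv_le]
    refine forall₂_congr fun v _ => ?_
    rw [dotProduct_comm, dotProduct_sub, dotProduct_sub, add_dotProduct, add_dotProduct]
    constructor <;> intro h <;> linarith
  have hPC : ∀ q u, u ∈ PC (S q) ↔ ∀ i ∈ q.1, ∀ y ∈ P i, u ⬝ᵥ y ≤ u ⬝ᵥ G q.1 q.2 i := by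
    intro q u
    simp only [PC, Set.mem_ofPred_eq]
    rw [hSall q (fun p => p.1 ⬝ᵥ u ≤ 0)]
    refine forall₂_congr fun i _ => ?_
    rw [hPV i, ← conv_le]
    refine forall₂_congr fun v _ => ?_
    rw [dotProduct_comm, dotProduct_sub]
    constructor <;> intro h <;> linarith
  have hPC' : ∀ q u, q.2 ∈ ∑ i ∈ q.1, P i →
      (u ∈ PC (S q) ↔ ∀ y ∈ ∑ i ∈ q.1, P i, u ⬝ᵥ y ≤ u ⬝ᵥ q.2) := by
    intro q u hq
    rw [hPC]
    obtain ⟨g1, g2, -⟩ := hG q.1 q.2 hq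
    constructor
    · intro h y hy
      obtain ⟨k, k1, rfl⟩ := (mem_sum P hne' _ _).1 hy
      conv_rhs => rw [← g2]
      rw [dotProduct_sum, dotProduct_sum]
      exact Finset.sum_le_sum fun i hi => h i hi _ (k1 i)
    · intro h i hi y hy
      have h1 := h (∑ j ∈ q.1, Function.update (G q.1 q.2) i y j)
        ((mem_sum P hne' _ _).2 ⟨_, fun j => ?_, rfl⟩)
      · rw [sum_upd q.1 (fun _ z => z) _ i hi y, g2, dotProduct_add, dotProduct_sub] at h1
        linarith
      · by_cases h : j = i
        · subst h; simpa using hy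
        · simpa [h] using g1 j
  have hface : ∀ (I : Finset (Fin (n + 1))) x u, IsLatticePt x →
      (x ∈ faceLat P a u I ↔ x ∈ ∑ i ∈ I, P i ∧ u ∈ PQ (S (I, x))) := by
    intro I x u hx
    rw [hPQ]
    constructor
    · rintro ⟨-, k, k1, k2, k3⟩
      have hmem : x ∈ ∑ i ∈ I, P i := (mem_sum P hne' _ _).2 ⟨k, k1, k3⟩
      refine ⟨hmem, ?_⟩
      obtain ⟨g1, g2, g3⟩ := hG I x hmem
      have e1 := g3 k k1 k3
      have e2 : ∀ i ∈ I, (u + a i) ⬝ᵥ G I x i ≤ (u + a i) ⬝ᵥ k i :=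
        fun i hi => k2 i hi _ (g1 i)
      have e3 : ∑ i ∈ I, (u + a i) ⬝ᵥ G I x i = ∑ i ∈ I, (u + a i) ⬝ᵥ k i := by
        apply le_antisymm (Finset.sum_le_sum e2)
        simp only [add_dotProduct, Finset.sum_add_distrib, ← dotProduct_sum]
        rw [g2, k3]
        linarith
      have e4 := (Finset.sum_eq_sum_iff_of_le e2).1 e3
      intro i hi y hy
      exact (k2 i hi y hy).trans (e4 i hi).ge
    · rintro ⟨hmem, h⟩
      obtain ⟨g1, g2, -⟩ := hG I x hmem
      exact ⟨hx, G I x, g1, h, g2⟩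
  have hmain := eul_linear (Finset.univ ×ˢ X)
    (fun q => (-1 : ℤ) ^ q.1.card * indZ (q.2 ∈ ∑ i ∈ q.1, P i)) S ?_
  swap
  · intro u
    obtain ⟨i, hi⟩ := ha u
    obtain ⟨v, hv, hvmax⟩ := exists_unique_max (V i) (hVne i) (u + a i) hi
    rw [← hPV i] at hvmax
    have hvP : v ∈ P i := by rw [hPV i]; exact subset_convexHull _ _ hv
    rw [← faceLat_alternating P a u i v hvP (hVl i v hv) hvmax, Finset.sum_product]
    refine Finset.sum_congr rfl fun I _ => ?_
    rw [← sum_indZ X (faceLat P a u I), Finset.mul_sum]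
    · refine Finset.sum_congr rfl fun x hx => ?_
      rw [mul_assoc]
      congr 1
      have hx' := ((hXmem x).1 hx).1
      rw [indZ_congr (hface I x u hx')]
      exact (indZ_and _ _).symm
    · intro x hx
      exact (hXmem x).2 ⟨hx.1, I, ((hface I x u hx.1).1 hx).1⟩
  have hzero : ∀ (I : Finset (Fin (n + 1))) x, x ∈ ∑ i ∈ I, P i →
      x ∉ intrinsicInterior ℝ (∑ i ∈ I, P i) → eul n (S (I, x)) = 0 := by
    intro I x hx hxi
    obtain ⟨d, hd1, y, hy, hd2⟩ := exists_support (hsc I) hx hxi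
    apply eul_zero _ d
    · exact (hPC' (I, x) d hx).2 hd1
    · intro h
      have := (hPC' (I, x) (-d) hx).1 h y hy
      rw [neg_dotProduct, neg_dotProduct] at this
      linarith
  rw [Finset.sum_product] at hmain
  have huniv : ∑ x ∈ X, (-1 : ℤ) ^ (Finset.univ : Finset (Fin (n + 1))).card *
      indZ (x ∈ ∑ i, P i) * eul n (S (Finset.univ, x)) =
        (-1) ^ (n + 1) * ((relintLat (∑ i, P i)).ncard : ℤ) := by
    rw [← sum_indZ X (relintLat (∑ i, P i)), Finset.mul_sum]
    · refine Finset.sum_congr rfl fun x hx => ?_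
      rw [mul_assoc, Finset.card_univ, Fintype.card_fin]
      congr 1
      by_cases h1 : x ∈ ∑ i, P i
      · rw [indZ_true h1, one_mul]
        by_cases h2 : x ∈ intrinsicInterior ℝ (∑ i, P i)
        · rw [indZ_true (show x ∈ relintLat (∑ i, P i) from ⟨h2, ((hXmem x).1 hx).1⟩)]
          have hint := mem_interior_of_full hsum h2
          apply eul_one
          · intro d hd
            exact eq_zero_of_interior hint d ((hPC' (Finset.univ, x) d h1).1 hd)
          · obtain ⟨u, hu⟩ := exists_dual P hne' hc hcv a Finset.univ x hint _
              (hG Finset.univ x h1)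
            exact ⟨u, (hPQ _ _).2 hu⟩
        · rw [hzero _ _ h1 h2, indZ_false (fun h => h2 h.1)]
      · rw [indZ_false h1, zero_mul, indZ_false]
        exact fun h => h1 (intrinsicInterior_subset h.1)
    · intro x hx
      exact (hXmem x).2 ⟨hx.2, Finset.univ, intrinsicInterior_subset hx.1⟩
  have hempty : ∑ x ∈ X, (-1 : ℤ) ^ (∅ : Finset (Fin (n + 1))).card *
      indZ (x ∈ ∑ i ∈ (∅ : Finset (Fin (n + 1))), P i) * eul n (S (∅, x)) = (-1) ^ n := by
    have h0 : (0 : Fin n → ℝ) ∈ ∑ i ∈ (∅ : Finset (Fin (n + 1))), P i := by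
      rw [Finset.sum_empty]; exact Set.mem_zero.2 rfl
    rw [Finset.sum_eq_single_of_mem (0 : Fin n → ℝ), indZ_true h0]
    · have : S (∅, 0) = ∅ := by simp [S]
      rw [this, eul_empty]; simp
    · exact (hXmem 0).2 ⟨fun i => ⟨0, by simp⟩, ∅, h0⟩
    · intro x _ hx
      rw [indZ_false]
      · ring
      · rw [Finset.sum_empty, Set.mem_zero]; exact hx
  rw [Finset.sum_eq_add (∅ : Finset (Fin (n + 1))) Finset.univ] at hmain
  · rw [hempty, huniv, pow_succ] at hmain
    have h1 : (-1 : ℤ) ^ n * (1 - ((relintLat (∑ i, P i)).ncard : ℤ)) = 0 := by linarith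
    rcases mul_eq_zero.1 h1 with h | h
    · exact absurd h (pow_ne_zero _ (by norm_num))
    · omega
  · exact Finset.univ_nonempty.ne_empty.symm
  · intro I _ hI
    refine Finset.sum_eq_zero fun x hx => ?_
    by_cases h1 : x ∈ ∑ i ∈ I, P i
    · rw [hzero I x h1, mul_zero]
      intro h2
      have h3 : x ∈ relintLat (∑ i ∈ I, P i) := ⟨h2, ((hXmem x).1 hx).1⟩
      rw [hhollow I (Finset.nonempty_iff_ne_empty.2 hI.1) hI.2] at h3
      exact h3
    · rw [indZ_false h1]; ring
  · intro h; exact absurd (Finset.mem_univ _) h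
  · intro h; exact absurd (Finset.mem_univ _) h
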